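/- Let Y be a finite set, β > 0, π_ref a probability mass function on Y with π_ref(y) > 0 for all y, and r : Y → ℝ. Define Z = ∑_{y∈Y} π_ref(y)·exp(r(y)/β) and the Gibbs policy π*(y) = π_ref(y)·exp(r(y)/β)/Z. Then: (i) for all y₁, y₂ ∈ Y, β·(log(π*(y₁)/π_ref(y₁)) − log(π*(y₂)/π_ref(y₂))) = r(y₁) − r(y₂); in particular the implicit-reward distillation loss E[(β log(π*(y₁)/π_ref(y₁)) − β log(π*(y₂)/π_ref(y₂)) − (r(y₁) − r(y₂)))²] is zero pointwise; and (ii) if π is any probability mass function on Y with π(y) > 0 for all y such that β·(log(π(y₁)/π_ref(y₁)) − log(π(y₂)/π_ref(y₂))) = r(y₁) − r(y₂) for all y₁, y₂ ∈ Y, then π = π*. -/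

import Mathlib

/-!
The implicit reward of a positive function `π` equals `r + a` for a constant `a` exactly when
`π = πref * exp (r / β) * exp (a / β)`. Matching all differences of `r` therefore determines `π`
up to a constant factor, and the total mass determines that factor; for the Gibbs policy the
constant is `a = -(β * log Z)`.
-/

/-- The implicit reward of a policy `π` relative to the reference `πref` at scale `β`. Policies are
real-valued functions, so the value is meaningful only where both are positive. -/
noncomputable def implicitReward {Y : Type*} (β : ℝ) (πref π : Y → ℝ) (y : Y) : ℝ :=
  β * Real.log (π y / πref y)

/-- The Gibbs policy before normalization: the reference `πref` tilted by the reward `r` at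
scale `β`. -/
noncomputable def gibbsWeight {Y : Type*} (β : ℝ) (πref r : Y → ℝ) (y : Y) : ℝ :=
  πref y * Real.exp (r y / β)

theorem eq_div_of_hasSum_one {ι K : Type*} [DivisionRing K] [TopologicalSpace K]
    [IsTopologicalSemiring K] [T2Space K] {p w : ι → K} {c Z : K}
    (hp : HasSum p 1) (hw : HasSum w Z) (h : ∀ i, p i = w i * c) (i : ι) : p i = w i / Z := by
  have hZc : Z * c = 1 := ((hw.mul_right c).congr_fun h).unique hp
  rw [h, div_eq_mul_inv, eq_inv_of_mul_eq_one_right hZc]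

section

variable {Y : Type*} {β : ℝ} {πref π r : Y → ℝ} {Z : ℝ}

theorem gibbsWeight_pos {y : Y} (href : 0 < πref y) : 0 < gibbsWeight β πref r y :=
  mul_pos href (Real.exp_pos _)

theorem implicitReward_eq_add_iff {y : Y} {a : ℝ} (hβ : β ≠ 0) (href : 0 < πref y)
    (hπ : 0 < π y) :
    implicitReward β πref π y = r y + a ↔ π y = gibbsWeight β πref r y * Real.exp (a / β) := by
  calc implicitReward β πref π y = r y + a
    _ ↔ Real.log (π y / πref y) = (r y + a) / β := by
      rw [implicitReward, eq_div_iff hβ, mul_comm]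
    _ ↔ π y / πref y = Real.exp ((r y + a) / β) := by
      rw [← Real.exp_eq_exp, Real.exp_log (div_pos hπ href)]
    _ ↔ π y = gibbsWeight β πref r y * Real.exp (a / β) := by
      rw [div_eq_iff href.ne', gibbsWeight, add_div, Real.exp_add, mul_comm, mul_assoc]

theorem pos_of_hasSum_gibbsWeight [Nonempty Y] (href : ∀ y, 0 < πref y)
    (hZ : HasSum (gibbsWeight β πref r) Z) : 0 < Z :=
  hZ.tsum_eq ▸ hZ.summable.tsum_pos (fun y => (gibbsWeight_pos (href y)).le)
    (Classical.arbitrary Y) (gibbsWeight_pos (href _))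

theorem implicitReward_gibbsWeight_div {y : Y} (hβ : β ≠ 0) (href : 0 < πref y) (hZ : 0 < Z) :
    implicitReward β πref (fun x => gibbsWeight β πref r x / Z) y = r y - β * Real.log Z := by
  rw [sub_eq_add_neg, implicitReward_eq_add_iff hβ href (div_pos (gibbsWeight_pos href) hZ),
    neg_div, mul_div_cancel_left₀ _ hβ, Real.exp_neg, Real.exp_log hZ, div_eq_mul_inv]

theorem implicitReward_gibbsWeight_div_sub {y₁ y₂ : Y} (hβ : β ≠ 0) (href₁ : 0 < πref y₁)
    (href₂ : 0 < πref y₂) (hZ : 0 < Z) :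
    implicitReward β πref (fun x => gibbsWeight β πref r x / Z) y₁ -
      implicitReward β πref (fun x => gibbsWeight β πref r x / Z) y₂ = r y₁ - r y₂ := by
  rw [implicitReward_gibbsWeight_div hβ href₁ hZ, implicitReward_gibbsWeight_div hβ href₂ hZ,
    sub_sub_sub_cancel_right]

theorem eq_gibbsWeight_div_of_implicitReward_sub_eq (hβ : β ≠ 0) (href : ∀ y, 0 < πref y)
    (hZ : HasSum (gibbsWeight β πref r) Z) (hπ : ∀ y, 0 < π y) (hπ_sum : HasSum π 1)
    (h : ∀ y₁ y₂, implicitReward β πref π y₁ - implicitReward β πref π y₂ = r y₁ - r y₂) :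
    π = fun y => gibbsWeight β πref r y / Z := by
  funext y₀
  have hadd (y : Y) :
      implicitReward β πref π y = r y + (implicitReward β πref π y₀ - r y₀) := by
    linarith [h y y₀]
  exact eq_div_of_hasSum_one hπ_sum hZ
    (fun y => (implicitReward_eq_add_iff hβ (href y) (hπ y)).mp (hadd y)) y₀

end

theorem gibbs_policy_distillation_general {Y : Type*} {β : ℝ} (hβ : β ≠ 0)
    {πref : Y → ℝ} (href_pos : ∀ y, 0 < πref y) {r : Y → ℝ}
    {Z : ℝ} (hZ : HasSum (fun y => πref y * Real.exp (r y / β)) Z)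
    {πstar : Y → ℝ} (hπstar : ∀ y, πstar y = πref y * Real.exp (r y / β) / Z) :
    (∀ y₁ y₂ : Y,
      β * (Real.log (πstar y₁ / πref y₁) - Real.log (πstar y₂ / πref y₂)) = r y₁ - r y₂) ∧
    (∀ y₁ y₂ : Y,
      (β * Real.log (πstar y₁ / πref y₁) - β * Real.log (πstar y₂ / πref y₂)
        - (r y₁ - r y₂)) ^ 2 = 0) ∧
    (∀ π : Y → ℝ, (∀ y, 0 < π y) → HasSum π 1 →
      (∀ y₁ y₂ : Y,
        β * (Real.log (π y₁ / πref y₁) - Real.log (π y₂ / πref y₂)) = r y₁ - r y₂) →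
      π = πstar) := by
  obtain rfl : πstar = fun y => gibbsWeight β πref r y / Z := funext hπstar
  have hsub (y₁ y₂ : Y) :
      implicitReward β πref (fun y => gibbsWeight β πref r y / Z) y₁ -
        implicitReward β πref (fun y => gibbsWeight β πref r y / Z) y₂ = r y₁ - r y₂ :=
    have : Nonempty Y := ⟨y₁⟩
    implicitReward_gibbsWeight_div_sub hβ (href_pos y₁) (href_pos y₂)
      (pos_of_hasSum_gibbsWeight href_pos hZ)
  simp only [mul_sub]
  exact ⟨hsub, fun y₁ y₂ => sq_eq_zero_iff.mpr (sub_eq_zero.mpr (hsub y₁ y₂)),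
    fun _ => eq_gibbsWeight_div_of_implicitReward_sub_eq hβ href_pos hZ⟩

/-- Theorem 1 (core): the Gibbs policy π* ∝ π_ref·exp(r/β) has implicit reward
differences exactly matching r (so the implicit-reward distillation loss is zero
pointwise), and it is the unique fully supported pmf with this property. -/
theorem gibbs_policy_distillation {Y : Type*} [Fintype Y]
    (β : ℝ) (hβ : 0 < β)
    (πref : Y → ℝ) (href_pos : ∀ y, 0 < πref y) (href_sum : ∑ y, πref y = 1)
    (r : Y → ℝ)
    (Z : ℝ) (hZ : Z = ∑ y, πref y * Real.exp (r y / β))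
    (πstar : Y → ℝ) (hπstar : ∀ y, πstar y = πref y * Real.exp (r y / β) / Z) :
    (∀ y₁ y₂ : Y,
      β * (Real.log (πstar y₁ / πref y₁) - Real.log (πstar y₂ / πref y₂)) = r y₁ - r y₂) ∧
    (∀ y₁ y₂ : Y,
      (β * Real.log (πstar y₁ / πref y₁) - β * Real.log (πstar y₂ / πref y₂)
        - (r y₁ - r y₂)) ^ 2 = 0) ∧
    (∀ π : Y → ℝ, (∀ y, 0 < π y) → (∑ y, π y = 1) →
      (∀ y₁ y₂ : Y,
        β * (Real.log (π y₁ / πref y₁) - Real.log (π y₂ / πref y₂)) = r y₁ - r y₂) →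
      π = πstar) := by
  obtain ⟨hsub, hloss, huniq⟩ :=
    gibbs_policy_distillation_general hβ.ne' href_pos (hZ ▸ hasSum_fintype _) hπstar
  exact ⟨hsub, hloss, fun π hπ hπ_sum => huniq π hπ (hπ_sum ▸ hasSum_fintype π)⟩
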